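/- Let G : ℓ^m → ℓ^r be strictly causal. A map Ψ = (Ψ^y, Ψ^u) : ℓ^r × ℓ^m → ℓ^r × ℓ^m, with Ψ^{u°}(v,d) := Ψ^u(v,d) − d, equals the closed-loop map Φ_{G,K} of G with some causal controller K : ℓ^r → ℓ^m if and only if the following three conditions hold: (a) Ψ^{u°} is causal–strictly-causal; (b) Ψ^y(v,d) = G(Ψ^u(v,d)) + v for every (v,d); (c) for every (v,d), Ψ^{u°}(v,d) = Ψ^{u°}(ṽ,d̃), where (ṽ,d̃) is the unique pair with Ψ(ṽ,d̃) = (Ψ^y(v,d), 0) (Ψ is a bijection under (a)–(b)). Moreover, under (a)–(c) the achieving controller is unique and given by K y = Ψ^{u°}(Ψ^{-1}(y, 0)) for every y ∈ ℓ^r. -/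

import Mathlib

/-- Sequences with values in `ℝ^n` (with the Euclidean norm). -/
abbrev Traj (n : ℕ) : Type := ℕ → EuclideanSpace ℝ (Fin n)

/-- A causal operator on sequences. -/
def Causal {n m : ℕ} (A : Traj n → Traj m) : Prop :=
  ∀ (x x' : Traj n) (t : ℕ), (∀ s, s ≤ t → x s = x' s) → A x t = A x' t

/-- A strictly causal operator on sequences. -/
def StrictlyCausal {n m : ℕ} (A : Traj n → Traj m) : Prop :=
  ∀ (x x' : Traj n) (t : ℕ), (∀ s, s < t → x s = x' s) → A x t = A x' t

/-- Causal in the first argument, strictly causal in the second argument. -/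
def CausalSC {n q m : ℕ} (B : Traj n → Traj q → Traj m) : Prop :=
  ∀ (x x' : Traj n) (z z' : Traj q) (t : ℕ),
    (∀ s, s ≤ t → x s = x' s) → (∀ s, s < t → z s = z' s) → B x z t = B x' z' t

/-- Causal in both arguments. -/
def CausalCC {n q m : ℕ} (B : Traj n → Traj q → Traj m) : Prop :=
  ∀ (x x' : Traj n) (z z' : Traj q) (t : ℕ),
    (∀ s, s ≤ t → x s = x' s) → (∀ s, s ≤ t → z s = z' s) → B x z t = B x' z' t

/-- Strictly causal in both arguments. -/
def CausalSS {n q m : ℕ} (B : Traj n → Traj q → Traj m) : Prop :=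
  ∀ (x x' : Traj n) (z z' : Traj q) (t : ℕ),
    (∀ s, s < t → x s = x' s) → (∀ s, s < t → z s = z' s) → B x z t = B x' z' t

/-- Membership in `ℓ_p`: summability of `‖x t‖ ^ p`. -/
def InLp (p : ℝ) {E : Type*} [Norm E] (x : ℕ → E) : Prop :=
  Summable fun t => ‖x t‖ ^ p

/-- The `ℓ_p` norm `(∑ₜ ‖x t‖ ^ p) ^ (1/p)` of a sequence. -/
noncomputable def lpSeqNorm (p : ℝ) {E : Type*} [Norm E] (x : ℕ → E) : ℝ :=
  (∑' t, ‖x t‖ ^ p) ^ (1 / p)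

/-- The `ℝ^{r+m}`-valued sequence obtained by stacking `v` and `d`
(the norm of `(v t, d t)` is the Euclidean norm of the concatenated vector). -/
noncomputable def pairSeq {r m : ℕ} (v : Traj r) (d : Traj m) :
    ℕ → WithLp 2 (EuclideanSpace ℝ (Fin r) × EuclideanSpace ℝ (Fin m)) :=
  fun t => (WithLp.equiv 2 _).symm (v t, d t)

/-- An exponentially decaying sequence: `‖x t‖ ≤ k · α ^ t` with `k > 0`, `α ∈ (0,1)`. -/
def ExpDecay {E : Type*} [Norm E] (x : ℕ → E) : Prop :=
  ∃ k : ℝ, 0 < k ∧ ∃ α : ℝ, 0 < α ∧ α < 1 ∧ ∀ t, ‖x t‖ ≤ k * α ^ t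

/-!
If the values of two operators at every time `s` agree whenever their arguments agree before `s`,
then their fixed points agree, by well-founded induction on time; and a strictly causal operator
has a fixed point, by well-founded recursion.

In closed loop, `y` is a fixed point of the strictly causal operator `w ↦ G (K w + d) + v`.
Comparing these fixed points for two inputs shows that `Ψu v d - d = K y` is causal in `v` and
strictly causal in `d`. Conversely, condition (a) says that `d ↦ -(Ψu v d - d) + u` is strictly
causal, so `Ψu v d = u` can be solved for `d`, causally in `v` and `u`. With `u = 0` and
`v = -G 0 + y` this gives a point of `Ψ⁻¹ (y, 0)` depending causally on `y`, hence a causal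
controller `K y := Ψu° (Ψ⁻¹ (y, 0))`, and condition (c) says precisely that `K` closes the loop.
-/

section

open Set Function

variable {T E F Y U : Type*}

section Causality

variable [Preorder T]

/-- Causality of an operator on signals over an arbitrary time `T`. The predicate `Causal` is the
case `T = ℕ` with Euclidean values, to which this one unfolds. -/
def IsCausal (A : (T → E) → T → F) : Prop :=
  ∀ x x' t, EqOn x x' (Iic t) → A x t = A x' t

/-- Strict causality of an operator on signals over an arbitrary time `T`; generalizes
`StrictlyCausal`. -/
def IsStrictlyCausal (A : (T → E) → T → F) : Prop :=
  ∀ x x' t, EqOn x x' (Iio t) → A x t = A x' t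

/-- Causality in the first and strict causality in the second argument, over an arbitrary time `T`;
generalizes `CausalSC`. -/
def IsCausalStrictlyCausal (B : (T → E) → (T → F) → T → U) : Prop :=
  ∀ x x' z z' t, EqOn x x' (Iic t) → EqOn z z' (Iio t) → B x z t = B x' z' t

theorem IsCausal.eqOn_Iio {A : (T → E) → T → F} (hA : IsCausal A) {x x' : T → E} {t : T}
    (h : EqOn x x' (Iio t)) : EqOn (A x) (A x') (Iio t) :=
  fun s hs => hA x x' s (h.mono (Iic_subset_Iio.2 hs))

end Causality

section FixedPoints

variable [Preorder T] [WellFoundedLT T]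

theorem eqOn_Iic_of_isFixedPt {A A' : (T → E) → T → E} {z z' : T → E} {t : T}
    (hz : IsFixedPt A z) (hz' : IsFixedPt A' z')
    (h : ∀ s ≤ t, ∀ w w', EqOn w w' (Iio s) → A w s = A' w' s) : EqOn z z' (Iic t) := by
  intro s hs
  induction s using WellFoundedLT.induction with
  | ind s ih =>
    calc z s = A z s := (congrFun hz s).symm
      _ = A' z' s := h s hs z z' fun q hq => ih q hq (hq.le.trans hs)
      _ = z' s := congrFun hz' s

theorem IsStrictlyCausal.exists_isFixedPt [Nonempty E] {A : (T → E) → T → E}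
    (hA : IsStrictlyCausal A) : ∃ z, IsFixedPt A z := by
  classical
  let z : T → E := WellFoundedLT.fix fun t past =>
    A (fun s => if hs : s < t then past s hs else Classical.arbitrary E) t
  refine ⟨z, funext fun t => ?_⟩
  have z_apply : z t = A (fun s => if s < t then z s else Classical.arbitrary E) t :=
    WellFoundedLT.fix_eq _ t
  rw [z_apply]
  exact hA _ _ t fun s hs => (if_pos hs).symm

variable [AddGroup U] {Ψu : (T → Y) → (T → U) → T → U}

theorem IsCausalStrictlyCausal.exists_apply_eq
    (hΨ : IsCausalStrictlyCausal fun v d => Ψu v d - d) (v : T → Y) (u : T → U) :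
    ∃ d, Ψu v d = u := by
  have hA : IsStrictlyCausal fun d => -(Ψu v d - d) + u := fun d d' t hd =>
    congrArg (-· + u t) (hΨ v v d d' t (eqOn_refl v _) hd)
  obtain ⟨d, hd⟩ := hA.exists_isFixedPt
  exact ⟨d, by simpa using (neg_add_eq_iff_eq_add.1 hd).symm⟩

theorem IsCausalStrictlyCausal.eqOn_Iic_of_apply
    (hΨ : IsCausalStrictlyCausal fun v d => Ψu v d - d) {v v' : T → Y} {d d' : T → U} {t : T}
    (hv : EqOn v v' (Iic t)) (hu : EqOn (Ψu v d) (Ψu v' d') (Iic t)) : EqOn d d' (Iic t) := by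
  have isFixedPt (v : T → Y) (d : T → U) : IsFixedPt (fun w => -(Ψu v w - w) + Ψu v d) d :=
    neg_add_eq_iff_eq_add.2 (sub_add_cancel _ _).symm
  refine eqOn_Iic_of_isFixedPt (isFixedPt v d) (isFixedPt v' d') fun s hs w w' hw => ?_
  exact congrArg₂ (-· + ·) (hΨ v v' w w' s (hv.mono (Iic_subset_Iic.2 hs)) hw) (hu hs)

end FixedPoints

section ClosedLoop

variable [AddGroup Y] [AddGroup U]

/-- The pair `(Ψy, Ψu)` is the closed-loop map `Φ_{G,K}` of the plant `G` with the controller `K`.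
It is encoded by the closed-loop equations, which determine `(Ψy, Ψu)` when `G` is strictly causal
and `K` is causal. -/
def IsClosedLoopMap (G : (T → U) → T → Y) (K : (T → Y) → T → U)
    (Ψy : (T → Y) → (T → U) → T → Y) (Ψu : (T → Y) → (T → U) → T → U) : Prop :=
  ∀ v d, Ψy v d = G (Ψu v d) + v ∧ Ψu v d = K (Ψy v d) + d

/-- Conditions (a), (b), (c) characterizing the achievable closed-loop maps of `G`. The pair
`Ψ⁻¹ (Ψy v d, 0)` of (c) is encoded as any `(v', d')` that `Ψ` sends to `(Ψy v d, 0)`. -/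
def AchievabilityConditions [Preorder T] (G : (T → U) → T → Y)
    (Ψy : (T → Y) → (T → U) → T → Y) (Ψu : (T → Y) → (T → U) → T → U) : Prop :=
  IsCausalStrictlyCausal (fun v d => Ψu v d - d) ∧
  (∀ v d, Ψy v d = G (Ψu v d) + v) ∧
  (∀ v v' d d', (Ψy v' d', Ψu v' d') = (Ψy v d, 0) → Ψu v d - d = Ψu v' d' - d')

variable {G : (T → U) → T → Y} {K K' : (T → Y) → T → U}
  {Ψy : (T → Y) → (T → U) → T → Y} {Ψu : (T → Y) → (T → U) → T → U}

theorem IsClosedLoopMap.controller_apply (h : IsClosedLoopMap G K Ψy Ψu) (v : T → Y) (d : T → U) :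
    K (Ψy v d) = Ψu v d - d :=
  eq_sub_of_add_eq (h v d).2.symm

theorem IsClosedLoopMap.isFixedPt (h : IsClosedLoopMap G K Ψy Ψu) (v : T → Y) (d : T → U) :
    IsFixedPt (fun w => G (K w + d) + v) (Ψy v d) := by
  change G (K (Ψy v d) + d) + v = Ψy v d
  rw [← (h v d).2, ← (h v d).1]

theorem IsClosedLoopMap.controller_unique (h : IsClosedLoopMap G K Ψy Ψu)
    (h' : IsClosedLoopMap G K' Ψy Ψu) (hΨy : ∀ y, ∃ v d, Ψy v d = y) : K = K' := by
  funext y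
  obtain ⟨v, d, rfl⟩ := hΨy y
  rw [h.controller_apply, h'.controller_apply]

variable [Preorder T] [WellFoundedLT T]

theorem IsClosedLoopMap.isCausalStrictlyCausal (h : IsClosedLoopMap G K Ψy Ψu)
    (hG : IsStrictlyCausal G) (hK : IsCausal K) :
    IsCausalStrictlyCausal fun v d => Ψu v d - d := by
  intro v v' d d' t hv hd
  have output_eqOn : EqOn (Ψy v d) (Ψy v' d') (Iic t) := by
    refine eqOn_Iic_of_isFixedPt (h.isFixedPt v d) (h.isFixedPt v' d') fun s hs w w' hw => ?_
    have input_eqOn : EqOn (K w + d) (K w' + d') (Iio s) := fun q hq =>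
      congrArg₂ (· + ·) (hK.eqOn_Iio hw hq) (hd (hq.trans_le hs))
    exact congrArg₂ (· + ·) (hG _ _ s input_eqOn) (hv hs)
  simpa only [h.controller_apply] using hK _ _ t output_eqOn

theorem IsClosedLoopMap.achievabilityConditions (h : IsClosedLoopMap G K Ψy Ψu)
    (hG : IsStrictlyCausal G) (hK : IsCausal K) : AchievabilityConditions G Ψy Ψu := by
  refine ⟨h.isCausalStrictlyCausal hG hK, fun v d => (h v d).1, fun v v' d d' hΨ => ?_⟩
  rw [← h.controller_apply, ← h.controller_apply, (Prod.mk.inj hΨ).1]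

theorem AchievabilityConditions.exists_apply_eq (hΨ : AchievabilityConditions G Ψy Ψu)
    (y : T → Y) (u : T → U) : ∃ d, (Ψy (-G u + y) d, Ψu (-G u + y) d) = (y, u) := by
  obtain ⟨d, hd⟩ := hΨ.1.exists_apply_eq (-G u + y) u
  exact ⟨d, by rw [hΨ.2.1, hd, add_neg_cancel_left]⟩

theorem AchievabilityConditions.exists_controller (hΨ : AchievabilityConditions G Ψy Ψu) :
    ∃ K, IsCausal K ∧ IsClosedLoopMap G K Ψy Ψu := by
  choose D hD using fun y => hΨ.exists_apply_eq y 0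
  obtain ⟨ha, hb, hc⟩ := hΨ
  let K y := Ψu (-G 0 + y) (D y) - D y
  refine ⟨K, fun y y' t hy => ?_, fun v d => ⟨hb v d, ?_⟩⟩
  · have hv : EqOn (-G 0 + y) (-G 0 + y') (Iic t) := fun s hs =>
      congrArg (-G 0 s + ·) (hy hs)
    have hu : Ψu (-G 0 + y) (D y) = Ψu (-G 0 + y') (D y') :=
      (Prod.mk.inj (hD y)).2.trans (Prod.mk.inj (hD y')).2.symm
    have hd : EqOn (D y) (D y') (Iic t) := ha.eqOn_Iic_of_apply hv fun s _ => congrFun hu s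
    exact ha _ _ _ _ t hv (hd.mono Iio_subset_Iic_self)
  · exact sub_eq_iff_eq_add.1 (hc v _ d _ (hD (Ψy v d)))

theorem AchievabilityConditions.existsUnique_controller (hΨ : AchievabilityConditions G Ψy Ψu) :
    ∃! K, IsCausal K ∧ IsClosedLoopMap G K Ψy Ψu := by
  refine existsUnique_of_exists_of_unique hΨ.exists_controller fun K K' hK hK' =>
    hK.2.controller_unique hK'.2 fun y => ?_
  obtain ⟨d, hd⟩ := hΨ.exists_apply_eq y 0
  exact ⟨_, d, (Prod.mk.inj hd).1⟩

theorem statement4_general (hG : IsStrictlyCausal G)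
    (Ψy : (T → Y) → (T → U) → T → Y) (Ψu : (T → Y) → (T → U) → T → U) :
    ((∃ K, IsCausal K ∧ IsClosedLoopMap G K Ψy Ψu) ↔ AchievabilityConditions G Ψy Ψu) ∧
    (AchievabilityConditions G Ψy Ψu →
      (∃! K, IsCausal K ∧ IsClosedLoopMap G K Ψy Ψu) ∧
      ∀ K, IsClosedLoopMap G K Ψy Ψu →
        ∀ y v' d', (Ψy v' d', Ψu v' d') = (y, 0) → K y = Ψu v' d' - d') := by
  refine ⟨⟨?_, fun hΨ => hΨ.exists_controller⟩, fun hΨ => ⟨hΨ.existsUnique_controller, ?_⟩⟩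
  · rintro ⟨K, hK, h⟩
    exact h.achievabilityConditions hG hK
  · intro K h y v' d' hy
    rw [← (Prod.mk.inj hy).1, h.controller_apply]

end ClosedLoop

end

/-- characterization of the achievable closed-loop maps of a strictly causal
plant `G` under causal output feedback, with uniqueness of the achieving controller and
its formula `K y = Ψ^{u°}(Ψ⁻¹(y,0))`. -/
theorem statement4 {r m : ℕ} (G : Traj m → Traj r) (hG : StrictlyCausal G)
    (Ψy : Traj r → Traj m → Traj r) (Ψu : Traj r → Traj m → Traj m) :
    -- Ψ is a closed-loop map of G with some causal controller K iff (a)-(c) hold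
    ((∃ K : Traj r → Traj m, Causal K ∧
        ∀ (v : Traj r) (d : Traj m),
          Ψy v d = G (Ψu v d) + v ∧ Ψu v d = K (Ψy v d) + d)
      ↔
      (CausalSC (fun (v : Traj r) (d : Traj m) => Ψu v d - d) ∧
       (∀ (v : Traj r) (d : Traj m), Ψy v d = G (Ψu v d) + v) ∧
       (∀ (v v' : Traj r) (d d' : Traj m),
          (Ψy v' d', Ψu v' d') = (Ψy v d, (0 : Traj m)) →
          Ψu v d - d = Ψu v' d' - d'))) ∧
    -- under (a)-(c), the achieving controller is unique and given by the formula
    ((CausalSC (fun (v : Traj r) (d : Traj m) => Ψu v d - d) ∧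
      (∀ (v : Traj r) (d : Traj m), Ψy v d = G (Ψu v d) + v) ∧
      (∀ (v v' : Traj r) (d d' : Traj m),
          (Ψy v' d', Ψu v' d') = (Ψy v d, (0 : Traj m)) →
          Ψu v d - d = Ψu v' d' - d')) →
      (∃! K : Traj r → Traj m, Causal K ∧
        ∀ (v : Traj r) (d : Traj m),
          Ψy v d = G (Ψu v d) + v ∧ Ψu v d = K (Ψy v d) + d) ∧
      (∀ K : Traj r → Traj m, Causal K →
        (∀ (v : Traj r) (d : Traj m),
          Ψy v d = G (Ψu v d) + v ∧ Ψu v d = K (Ψy v d) + d) →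
        ∀ (y v' : Traj r) (d' : Traj m),
          (Ψy v' d', Ψu v' d') = (y, (0 : Traj m)) →
          K y = Ψu v' d' - d')) := by
  obtain ⟨hiff, hcontroller⟩ := statement4_general hG Ψy Ψu
  exact ⟨hiff, fun hΨ => ⟨(hcontroller hΨ).1, fun K _ => (hcontroller hΨ).2 K⟩⟩
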